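/- arXiv:2112.13919 — 2 statements merged into one kernel-verified Lean document; each statement's English description precedes it below -/
import Mathlib

section
/- Let P, Q ∈ ℤ[x] be coprime polynomials of degrees r and s respectively, with r ≥ max(1, s), and set P(x,y) = y^r·P(x/y) and Q(x,y) = y^r·Q(x/y) (the degree-r homogenizations). Then for all pairs (a,b) ∈ ℂ², max(|P(a,b)|, |Q(a,b)|) ≥ H(a,b)^r / (2^{r²} · (r+1)^{3r²/2} · max(H(P), H(Q))^{2r² + r}). -/
/-!
Let `S` be the `2r × 2r` Sylvester matrix of `P` and `Q`, both regarded as forms of degree `r`: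
its rows list the coefficients of `X ^ i * P` and `X ^ i * Q` for `i < r`.

* `det S ≠ 0` (`syl_det_ne_zero`): a vector in the left kernel is a relation `A P + B Q = 0` with
  `A`, `B` of degree `< r`; as `P` and `Q` are relatively prime in the UFD `ℤ[X]`, `P` divides `B`,
  which forces `B = 0` and then `A = 0`. Hence `|det S| ≥ 1`.
* Applied to the vector `v` of monomials `a ^ k * b ^ (2 r - 1 - k)`, the matrix `S` gives the
  vector `w` with entries `a ^ i * b ^ (r - 1 - i)` times `P(a, b)` or `Q(a, b)`
  (`syl_mulVec_inl`, `syl_mulVec_inr`), so `det S • v = adj S *ᵥ w`.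
* A determinant is at most the product of the `ℓ¹` norms of the rows (`norm_det_le_prod_sum`), so
  the entries of `adj S` are at most `((r + 1) M) ^ (2 r - 1)`, where `M = max (H(P), H(Q))`.

Reading off the coordinates `a ^ (2 r - 1)` and `b ^ (2 r - 1)` of `v` yields
`H(a, b) ^ (2 r - 1) ≤ 2 r ((r + 1) M) ^ (2 r - 1) H(a, b) ^ (r - 1) max (|P(a, b)|, |Q(a, b)|)`,
which is stronger than the claim.
-/

open Polynomial

/-- The height `H(P)` of an integer polynomial: the maximum of the absolute values of
its coefficients (as a natural number; `H(0) = 0`). -/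
def polyHeight (P : Polynomial ℤ) : ℕ := P.support.sup fun i => (P.coeff i).natAbs

/-- The degree-`r` homogenization of an integer polynomial, evaluated at a complex
point `(a, b)`: if `P(x) = ∑ cᵢ xⁱ`, this is `∑_{i ≤ r} cᵢ aⁱ b^(r−i)`,
i.e. `b^r · P(a/b)`. -/
noncomputable def homogEvalC (P : Polynomial ℤ) (r : ℕ) (a b : ℂ) : ℂ :=
  ∑ i ∈ Finset.range (r + 1), (P.coeff i : ℂ) * a ^ i * b ^ (r - i)

open Matrix in
theorem norm_det_le_prod_sum {n : Type*} [Fintype n] [DecidableEq n] (A : Matrix n n ℂ) :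
    ‖A.det‖ ≤ ∏ i, ∑ j, ‖A i j‖ := by
  rw [Finset.prod_univ_sum, ← Matrix.det_transpose, Matrix.det_apply]
  refine (norm_sum_le _ _).trans ?_
  have h1 : ∀ σ : Equiv.Perm n, ‖Equiv.Perm.sign σ • ∏ i, Aᵀ (σ i) i‖ = ∏ i, ‖A i (σ i)‖ := by
    intro σ
    rcases Int.units_eq_one_or (Equiv.Perm.sign σ) with h | h <;> simp [h]
  simp only [h1]
  rw [← Finset.sum_image (s := Finset.univ) (g := fun σ : Equiv.Perm n => (σ : n → n))
    (f := fun f : n → n => ∏ i, ‖A i (f i)‖) (fun _ _ _ _ h => DFunLike.coe_injective h)]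
  refine Finset.sum_le_sum_of_subset_of_nonneg ?_ ?_
  · intro f _
    simp
  · intro f _ _
    positivity

/-- Column exponents of the Sylvester matrix: the columns are indexed by `Fin r ⊕ Fin r`, and the
two copies stand for the exponents `0, …, r - 1` and `r, …, 2 r - 1`. -/
def colExp (r : ℕ) : Fin r ⊕ Fin r → ℕ := Sum.elim (fun i => (i : ℕ)) (fun i => r + i)

/-- The Sylvester matrix of `P` and `Q` as forms of degree `r`: its rows are the coefficients of
`X ^ i * P` and of `X ^ i * Q` for `i < r`. -/
noncomputable def syl (P Q : Polynomial ℤ) (r : ℕ) :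
    Matrix (Fin r ⊕ Fin r) (Fin r ⊕ Fin r) ℤ :=
  Matrix.of fun i j =>
    (Sum.elim (fun i : Fin r => X ^ (i : ℕ) * P) (fun i : Fin r => X ^ (i : ℕ) * Q) i).coeff
      (colExp r j)

theorem sum_colExp {M : Type*} [AddCommMonoid M] (r : ℕ) (f : ℕ → M) :
    ∑ j, f (colExp r j) = ∑ k ∈ Finset.range (r + r), f k := by
  rw [Fintype.sum_sum_type, Finset.sum_range_add, Finset.sum_range, Finset.sum_range]
  rfl

theorem sum_coeff_shift {M : Type*} [AddCommMonoid M] (P : Polynomial ℤ) (r : ℕ)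
    (hP : P.natDegree ≤ r) (F : ℤ → ℕ → M) (hF : ∀ k, F 0 k = 0) (i : ℕ) (hi : i < r) :
    ∑ j, F ((X ^ i * P).coeff (colExp r j)) (colExp r j) =
      ∑ k ∈ Finset.range (r + 1), F (P.coeff k) (k + i) := by
  rw [sum_colExp r (fun k => F ((X ^ i * P : Polynomial ℤ).coeff k) k)]
  symm
  refine Finset.sum_of_injOn (fun k => k + i) ?_ ?_ ?_ ?_
  · intro x _ y _ h
    simpa using h
  · intro x hx
    simp only [Finset.coe_range, Set.mem_Iio] at hx ⊢
    omega
  · intro k _ hk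
    have : (X ^ i * P).coeff k = 0 := by
      rw [coeff_X_pow_mul']
      split_ifs with h
      · apply coeff_eq_zero_of_natDegree_lt
        by_contra hc
        exact hk ⟨k - i, by simp only [Finset.coe_range, Set.mem_Iio]; omega, by simp only; omega⟩
      · rfl
    simp only [this, hF]
  · intro k _
    simp only [coeff_X_pow_mul]

theorem syl_det_ne_zero (P Q : Polynomial ℤ) (r : ℕ) (hr : 1 ≤ r) (hP : P.natDegree = r)
    (hQ : Q.natDegree ≤ r) (hcop : IsRelPrime P Q) : (syl P Q r).det ≠ 0 := by
  intro hdet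
  obtain ⟨u, hu, hu0⟩ := Matrix.exists_vecMul_eq_zero_iff.mpr hdet
  have hP0 : P ≠ 0 := by
    rintro rfl
    simp at hP
    omega
  let poly : (Fin r → ℤ) → Polynomial ℤ := fun c => ∑ i : Fin r, C (c i) * X ^ (i : ℕ)
  have hpc : ∀ c (i : Fin r), (poly c).coeff i = c i := by
    intro c i
    simp [poly, finsetSum_coeff, coeff_X_pow, ← Fin.ext_iff]
  have hpd : ∀ c, (poly c).degree < r := fun c => by
    refine (degree_sum_le _ _).trans_lt ?_
    refine (Finset.sup_lt_iff (WithBot.bot_lt_coe r)).mpr fun i _ => ?_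
    exact (degree_C_mul_X_pow_le _ _).trans_lt (WithBot.coe_lt_coe.mpr (Nat.cast_lt.mpr i.2))
  have hp0 : ∀ c, poly c = 0 → c = 0 := by
    intro c h
    ext i
    rw [← hpc c i, h]
    simp
  set A := poly (fun i => u (Sum.inl i)) with hA
  set B := poly (fun i => u (Sum.inr i)) with hB
  have hcoef : ∀ j, (A * P + B * Q).coeff (colExp r j) = 0 := by
    intro j
    have := congrFun hu0 j
    simp only [Matrix.vecMul, dotProduct, Fintype.sum_sum_type, syl, Matrix.of_apply,
      Sum.elim_inl, Sum.elim_inr, Pi.zero_apply] at this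
    rw [← this, hA, hB]
    simp only [poly, Finset.sum_mul, coeff_add, finsetSum_coeff, mul_assoc, coeff_C_mul]
  have hdegP : P.degree = r := by rw [degree_eq_natDegree hP0, hP]
  have hdegQ : Q.degree ≤ r := natDegree_le_iff_degree_le.mp hQ
  have hzero : A * P + B * Q = 0 := by
    ext k
    rw [coeff_zero]
    rcases lt_or_ge k r with hk | hk
    · exact hcoef (Sum.inl ⟨k, hk⟩)
    rcases lt_or_ge k (r + r) with hk2 | hk2
    · have h := hcoef (Sum.inr ⟨k - r, by omega⟩)
      simp only [colExp, Sum.elim_inr] at h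
      rwa [Nat.add_sub_cancel' hk] at h
    · have key : ∀ c (R : Polynomial ℤ), R.natDegree ≤ r → (poly c * R).coeff k = 0 := by
        intro c R hR
        apply coeff_eq_zero_of_natDegree_lt
        have h1 : (poly c).natDegree < r := by
          rcases eq_or_ne (poly c) 0 with h | h
          · rw [h, natDegree_zero]; exact hr
          · exact (natDegree_lt_iff_degree_lt h).mpr (hpd c)
        have := natDegree_mul_le (p := poly c) (q := R)
        omega
      rw [coeff_add, key _ _ hP.le, key _ _ hQ, add_zero]
  have hdvd : P ∣ B := by
    apply hcop.dvd_of_dvd_mul_right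
    exact ⟨-A, by linear_combination hzero⟩
  have hB0 : B = 0 := eq_zero_of_dvd_of_degree_lt hdvd (by rw [hdegP]; exact hpd _)
  have hA0 : A = 0 := by
    rw [hB0, zero_mul, add_zero] at hzero
    exact (mul_eq_zero.mp hzero).resolve_right hP0
  apply hu
  ext i
  rcases i with i | i
  · exact congrFun (hp0 _ hA0) i
  · exact congrFun (hp0 _ hB0) i

theorem coeff_le_polyHeight (P : Polynomial ℤ) (k : ℕ) : ‖(P.coeff k : ℂ)‖ ≤ polyHeight P := by
  rw [Complex.norm_intCast, ← Int.cast_abs, Int.abs_eq_natAbs, Int.cast_natCast]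
  by_cases h : k ∈ P.support
  · exact_mod_cast Finset.le_sup (f := fun i => (P.coeff i).natAbs) h
  · rw [notMem_support_iff.mp h]
    simp

theorem one_le_polyHeight (P : Polynomial ℤ) (hP : P ≠ 0) : 1 ≤ polyHeight P := by
  have h : P.natDegree ∈ P.support := natDegree_mem_support_of_nonzero hP
  refine le_trans ?_ (Finset.le_sup (f := fun i => (P.coeff i).natAbs) h)
  exact Int.natAbs_pos.mpr (mem_support_iff.mp h)

theorem row_sum_le (P : Polynomial ℤ) (r : ℕ) (hP : P.natDegree ≤ r) (i : ℕ) (hi : i < r)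
    (M : ℝ) (hM : (polyHeight P : ℝ) ≤ M) :
    ∑ j, ‖(((X ^ i * P).coeff (colExp r j) : ℤ) : ℂ)‖ ≤ (r + 1) * M := by
  rw [sum_coeff_shift P r hP (fun z _ => ‖(z : ℂ)‖) (by simp) i hi]
  refine (Finset.sum_le_card_nsmul _ _ M fun k _ => (coeff_le_polyHeight P k).trans hM).trans ?_
  simp

theorem homog_row (P : Polynomial ℤ) (r : ℕ) (hP : P.natDegree ≤ r) (i : ℕ) (hi : i < r)
    (a b : ℂ) :
    ∑ j, (((X ^ i * P).coeff (colExp r j) : ℤ) : ℂ) *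
        (a ^ colExp r j * b ^ (2 * r - 1 - colExp r j)) =
      a ^ i * b ^ (r - 1 - i) * homogEvalC P r a b := by
  rw [sum_coeff_shift P r hP (fun z k => (z : ℂ) * (a ^ k * b ^ (2 * r - 1 - k))) (by simp) i hi,
    homogEvalC, Finset.mul_sum]
  refine Finset.sum_congr rfl fun k hk => ?_
  have hk' := Finset.mem_range.mp hk
  rw [show 2 * r - 1 - (k + i) = (r - 1 - i) + (r - k) by omega, pow_add, pow_add]
  ring

/-- The vector of all monomials of degree `2 r - 1` in `a` and `b`. -/
noncomputable def monoVec (r : ℕ) (a b : ℂ) : Fin r ⊕ Fin r → ℂ :=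
  fun j => a ^ colExp r j * b ^ (2 * r - 1 - colExp r j)

open Matrix in
theorem syl_mulVec_inl (P Q : Polynomial ℤ) (r : ℕ) (hP : P.natDegree ≤ r) (a b : ℂ) (i : Fin r) :
    ((syl P Q r).map (Int.castRingHom ℂ) *ᵥ monoVec r a b) (Sum.inl i) =
      a ^ (i : ℕ) * b ^ (r - 1 - i) * homogEvalC P r a b :=
  homog_row P r hP i i.2 a b

open Matrix in
theorem syl_mulVec_inr (P Q : Polynomial ℤ) (r : ℕ) (hQ : Q.natDegree ≤ r) (a b : ℂ) (i : Fin r) :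
    ((syl P Q r).map (Int.castRingHom ℂ) *ᵥ monoVec r a b) (Sum.inr i) =
      a ^ (i : ℕ) * b ^ (r - 1 - i) * homogEvalC Q r a b :=
  homog_row Q r hQ i i.2 a b

/-- An adjugate entry is the determinant of the matrix with one row replaced by a unit vector, and
so is bounded by the product of the `ℓ¹` norms of the other rows. -/
theorem norm_adjugate_le {n : Type*} [Fintype n] [DecidableEq n] (A : Matrix n n ℂ) (K : ℝ)
    (hA : ∀ i, ∑ j, ‖A i j‖ ≤ K) (i j : n) :
    ‖A.adjugate i j‖ ≤ K ^ (Fintype.card n - 1) := by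
  rw [Matrix.adjugate_apply]
  refine (norm_det_le_prod_sum _).trans ?_
  rw [← Finset.mul_prod_erase _ _ (Finset.mem_univ j)]
  have h1 : ∑ k, ‖(A.updateRow j (Pi.single i 1)) j k‖ = 1 := by
    rw [Finset.sum_eq_single i]
    · simp
    · intro k _ hk
      simp [hk]
    · simp
  rw [h1, one_mul, ← Finset.card_univ, ← Finset.card_erase_of_mem (Finset.mem_univ j),
    ← Finset.prod_const]
  refine Finset.prod_le_prod (fun _ _ => by positivity) fun k hk => ?_
  rw [Matrix.updateRow_ne (Finset.ne_of_mem_erase hk)]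
  exact hA k

open Matrix in
theorem pow_max_le (P Q : Polynomial ℤ) (r : ℕ) (hr : 1 ≤ r) (hP : P.natDegree = r)
    (hQ : Q.natDegree ≤ r) (hcop : IsRelPrime P Q) (M : ℝ) (hMP : (polyHeight P : ℝ) ≤ M)
    (hMQ : (polyHeight Q : ℝ) ≤ M) (a b : ℂ) :
    (max ‖a‖ ‖b‖) ^ (2 * r - 1) ≤ (2 * r) * (((r + 1) * M) ^ (2 * r - 1) *
      ((max ‖a‖ ‖b‖) ^ (r - 1) * max ‖homogEvalC P r a b‖ ‖homogEvalC Q r a b‖)) := by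
  set A := (syl P Q r).map (Int.castRingHom ℂ) with hA
  set v := monoVec r a b with hv
  set H := max ‖a‖ ‖b‖ with hH
  set N := max ‖homogEvalC P r a b‖ ‖homogEvalC Q r a b‖ with hN
  have hM0 : 0 ≤ M := le_trans (by positivity) hMP
  have hdet : 1 ≤ ‖A.det‖ := by
    have h : A.det = ((syl P Q r).det : ℂ) := ((Int.castRingHom ℂ).map_det (syl P Q r)).symm
    rw [h, Complex.norm_intCast]
    exact_mod_cast Int.one_le_abs (syl_det_ne_zero P Q r hr hP hQ hcop)
  have hrow : ∀ i, ∑ j, ‖A i j‖ ≤ (r + 1) * M := by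
    rintro (i | i)
    · exact row_sum_le P r hP.le i i.2 M hMP
    · exact row_sum_le Q r hQ i i.2 M hMQ
  have hmono : ∀ i : Fin r, ‖a ^ (i : ℕ) * b ^ (r - 1 - i)‖ ≤ H ^ (r - 1) := by
    intro i
    have hi := i.2
    rw [norm_mul, norm_pow, norm_pow, show r - 1 = i + (r - 1 - i) by omega, pow_add,
      Nat.add_sub_cancel_left]
    gcongr
    · exact le_max_left _ _
    · exact le_max_right _ _
  have hw : ∀ i, ‖(A *ᵥ v) i‖ ≤ H ^ (r - 1) * N := by
    rintro (i | i)
    · rw [hA, hv, syl_mulVec_inl P Q r hP.le, norm_mul]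
      exact mul_le_mul (hmono i) (le_max_left _ _) (norm_nonneg _) (by positivity)
    · rw [hA, hv, syl_mulVec_inr P Q r hQ, norm_mul]
      exact mul_le_mul (hmono i) (le_max_right _ _) (norm_nonneg _) (by positivity)
  have hvj : ∀ j, ‖v j‖ ≤ (2 * r) * (((r + 1) * M) ^ (2 * r - 1) * (H ^ (r - 1) * N)) := by
    intro j
    have hcramer : A.det * v j = ∑ k, A.adjugate j k * (A *ᵥ v) k := by
      have h : A.adjugate *ᵥ (A *ᵥ v) = A.det • v := by
        rw [mulVec_mulVec, adjugate_mul, smul_mulVec, one_mulVec]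
      exact (congrFun h j).symm
    calc ‖v j‖ ≤ ‖A.det‖ * ‖v j‖ := le_mul_of_one_le_left (norm_nonneg _) hdet
      _ = ‖∑ k, A.adjugate j k * (A *ᵥ v) k‖ := by rw [← norm_mul, hcramer]
      _ ≤ ∑ k : Fin r ⊕ Fin r, ((r + 1) * M) ^ (2 * r - 1) * (H ^ (r - 1) * N) := by
        refine (norm_sum_le _ _).trans (Finset.sum_le_sum fun k _ => ?_)
        rw [norm_mul]
        have h := norm_adjugate_le A _ hrow j k
        rw [Fintype.card_sum, Fintype.card_fin, ← two_mul] at h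
        exact mul_le_mul h (hw k) (norm_nonneg _) (by positivity)
      _ = _ := by
        simp only [Finset.sum_const, Finset.card_univ, Fintype.card_sum, Fintype.card_fin,
          nsmul_eq_mul]
        push_cast
        ring
  rcases le_total ‖a‖ ‖b‖ with h | h
  · have h0 := hvj (Sum.inl ⟨0, hr⟩)
    have : ‖v (Sum.inl ⟨0, hr⟩)‖ = H ^ (2 * r - 1) := by
      simp [hv, monoVec, colExp, hH, max_eq_right h]
    rwa [this] at h0
  · have h0 := hvj (Sum.inr ⟨r - 1, by omega⟩)
    have : ‖v (Sum.inr ⟨r - 1, by omega⟩)‖ = H ^ (2 * r - 1) := by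
      simp only [hv, monoVec, colExp, hH, max_eq_left h, Sum.elim_inr]
      rw [show r + (r - 1) = 2 * r - 1 by omega]
      simp
    rwa [this] at h0

theorem const_le (r : ℕ) (hr : 1 ≤ r) (M : ℝ) (hM : 1 ≤ M) :
    (2 * r) * ((r + 1) * M) ^ (2 * r - 1) ≤
      (2 : ℝ) ^ (r ^ 2) * ((r : ℝ) + 1) ^ (3 * (r : ℝ) ^ 2 / 2) * M ^ (2 * r ^ 2 + r) := by
  rw [mul_pow, ← mul_assoc]
  have h1 : (2 * r : ℝ) ≤ 2 ^ (r ^ 2) := by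
    have h : r ≤ 2 ^ (r - 1) := by
      have := (r - 1).lt_two_pow_self
      omega
    calc (2 * r : ℝ) ≤ 2 * 2 ^ (r - 1) := by gcongr; exact_mod_cast h
      _ = 2 ^ r := by rw [← pow_succ', Nat.sub_add_cancel hr]
      _ ≤ 2 ^ (r ^ 2) := pow_le_pow_right₀ (by norm_num) (by nlinarith)
  have h2 : ((r : ℝ) + 1) ^ (2 * r - 1) ≤ ((r : ℝ) + 1) ^ (3 * (r : ℝ) ^ 2 / 2) := by
    rw [← Real.rpow_natCast]
    apply Real.rpow_le_rpow_of_exponent_le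
    · linarith [(Nat.cast_nonneg r : (0 : ℝ) ≤ r)]
    · rw [Nat.cast_sub (by omega)]
      push_cast
      nlinarith [sq_nonneg (3 * (r : ℝ) - 2)]
  have h3 : M ^ (2 * r - 1) ≤ M ^ (2 * r ^ 2 + r) := by
    apply pow_le_pow_right₀ hM
    have : r ≤ r ^ 2 := by nlinarith
    omega
  gcongr

/-- Let `P, Q ∈ ℤ[x]` be coprime polynomials of degrees `r` and `s` respectively,
with `r ≥ max (1, s)`, and let `P(x,y) = y^r·P(x/y)`, `Q(x,y) = y^r·Q(x/y)` be the
degree-`r` homogenizations. Then for all `(a, b) ∈ ℂ²`,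
`max (|P(a,b)|, |Q(a,b)|) ≥ H(a,b)^r / (2^(r²) · (r+1)^(3r²/2) · max (H(P), H(Q))^(2r² + r))`,
where `H(a,b) = max (|a|, |b|)`. -/
theorem two_homogenized_polys_lower_bound
    (P Q : Polynomial ℤ) (r s : ℕ)
    (hP : P.natDegree = r) (hQ : Q.natDegree = s) (hr1 : 1 ≤ r) (hsr : s ≤ r)
    (hcop : ∀ g : Polynomial ℤ, g ∣ P → g ∣ Q → IsUnit g) :
    ∀ a b : ℂ,
      (max ‖a‖ ‖b‖) ^ r /
          ((2 : ℝ) ^ (r ^ 2) * ((r : ℝ) + 1) ^ (3 * (r : ℝ) ^ 2 / 2) *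
            (max (polyHeight P) (polyHeight Q) : ℝ) ^ (2 * r ^ 2 + r)) ≤
        max ‖homogEvalC P r a b‖ ‖homogEvalC Q r a b‖ := by
  intro a b
  have hP0 : P ≠ 0 := by
    rintro rfl
    simp at hP
    omega
  set M : ℝ := max (polyHeight P : ℝ) (polyHeight Q : ℝ) with hMdef
  have hM : 1 ≤ M := le_max_of_le_left (by exact_mod_cast one_le_polyHeight P hP0)
  have hmain := pow_max_le P Q r hr1 hP (hQ.trans_le hsr) (fun g h1 h2 => hcop g h1 h2) M
    (le_max_left _ _) (le_max_right _ _) a b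
  have hc := const_le r hr1 M hM
  set H := max ‖a‖ ‖b‖ with hH
  set N := max ‖homogEvalC P r a b‖ ‖homogEvalC Q r a b‖ with hN
  have hH0 : 0 ≤ H := le_max_of_le_left (norm_nonneg _)
  have hN0 : 0 ≤ N := le_max_of_le_left (norm_nonneg _)
  rcases hH0.eq_or_lt with h0 | hpos
  · rw [← h0, zero_pow (by omega), zero_div]
    exact hN0
  rw [div_le_iff₀' (by positivity)]
  refine le_trans ?_ (mul_le_mul_of_nonneg_right hc hN0)
  have hpow : H ^ (2 * r - 1) = H ^ (r - 1) * H ^ r := by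
    rw [← pow_add]
    congr 1
    omega
  rw [hpow] at hmain
  refine le_of_mul_le_mul_left (hmain.trans_eq ?_) (pow_pos hpos (r - 1))
  ring
end

section
/- Let F(x,y) = c_d x^d + c_{d−1} x^{d−1} y + ⋯ + c₀ y^d ∈ ℤ[x,y] be an irreducible binary form of degree d ≥ 3, and let α₁, …, α_d be the roots of F(x,1). Then there exists an index j ∈ {1,…,d} and integers s, t, u, v such that α_j = (vα₁ − u)/(−tα₁ + s) if and only if the matrix M = (1/√|sv − tu|)·(s u; t v) belongs to Aut′|F|; moreover, if M ∈ Aut′|F| then |sv − tu| = |F(s,t)/c_d|^{2/d}. -/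
/-!
Write `c` for the leading coefficient, `D = sv − tu`, `ρᵢ` for the roots and `wᵢ = s − tρᵢ`.
Everything rests on the factorization `F(x,y) = c ∏ (x − ρᵢ y)` (`binaryFormEvalC_eq_prod`) and on
the fact that a rational polynomial vanishing at one root is divisible by `f` (`map_dvd_of_root`),
so that it vanishes at all of them. In particular no root is rational (`coeffs_zero_of_root`).

If `ρⱼ = ψ(ρ₀)` with `ψ(x) = (vx − u)/(s − tx)`, then `F(vx − u, s − tx)` vanishes at `ρ₀`, hence at
every root, so `ψ` permutes the roots: `ψ(ρᵢ) = ρ_{σ i}`. The factorization gives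
`F(sx + uy, tx + vy) = (∏ wᵢ) F(x,y)`. Multiplying `wᵢ wⱼ (ρ_{σ i} − ρ_{σ j}) = D (ρᵢ − ρⱼ)` over all
`i ≠ j` (a discriminant computation, `norm_sq_prod_eq`) yields `|∏ wᵢ|² = |D|^d`; as `∏ wᵢ = F(s,t)/c`
is real, it equals `± √|D|^d`, which is membership in the enhanced automorphism group.

Conversely, if `F_M = ±F`, evaluating at `(vρ₀ − u, s − tρ₀)` shows that `ψ(ρ₀)` is a root, and
evaluating at `(1, 0)` gives `|F(s,t)| = √|D|^d |c|`, which is the formula for `|D|`.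
-/

open Polynomial

/-- The binary form `F(x,y) = c_d x^d + ⋯ + c₀ y^d` associated with the integer
polynomial `f(x) = F(x,1) = ∑ cᵢ xⁱ` of degree `d`, evaluated at a complex point. -/
noncomputable def binaryFormEvalC (f : Polynomial ℤ) (d : ℕ) (x y : ℂ) : ℂ :=
  ∑ i ∈ Finset.range (d + 1), (f.coeff i : ℂ) * x ^ i * y ^ (d - i)

/-- The binary form `F` associated with `f`, evaluated at integers. -/
def binaryFormEvalZ (f : Polynomial ℤ) (d : ℕ) (x y : ℤ) : ℤ :=
  ∑ i ∈ Finset.range (d + 1), f.coeff i * x ^ i * y ^ (d - i)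

/-- Membership of the matrix `M = (1/√|sv−tu|)·(s u; t v)` in the enhanced
automorphism group `Aut′|F|` of the binary form `F` associated with `f`: the
condition `F_M = F` or `F_M = −F`, where `F_M(x,y) = F(sx + uy, tx + vy)` (with the
entries of `M` scaled by `1/√|sv−tu|`). -/
def MemEnhancedAut (f : Polynomial ℤ) (d : ℕ) (s t u v : ℤ) : Prop :=
  (∀ x y : ℂ,
    binaryFormEvalC f d
      (((Real.sqrt |((s * v - t * u : ℤ) : ℝ)|)⁻¹ : ℝ) * ((s : ℂ) * x + (u : ℂ) * y))
      (((Real.sqrt |((s * v - t * u : ℤ) : ℝ)|)⁻¹ : ℝ) * ((t : ℂ) * x + (v : ℂ) * y)) =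
      binaryFormEvalC f d x y) ∨
  (∀ x y : ℂ,
    binaryFormEvalC f d
      (((Real.sqrt |((s * v - t * u : ℤ) : ℝ)|)⁻¹ : ℝ) * ((s : ℂ) * x + (u : ℂ) * y))
      (((Real.sqrt |((s * v - t * u : ℤ) : ℝ)|)⁻¹ : ℝ) * ((t : ℂ) * x + (v : ℂ) * y)) =
      -binaryFormEvalC f d x y)

/-- The binary form splits into linear factors `x − ρᵢ y`; the case `y = 0` is included. -/
lemma binaryFormEvalC_eq_prod {d : ℕ} {f : Polynomial ℤ} (hdeg : f.natDegree = d) {ρ : Fin d → ℂ}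
    (hfact : f.map (Int.castRingHom ℂ) =
      Polynomial.C ((f.coeff d : ℤ) : ℂ) * ∏ i : Fin d, (Polynomial.X - Polynomial.C (ρ i)))
    (x y : ℂ) :
    binaryFormEvalC f d x y = (f.coeff d : ℂ) * ∏ i : Fin d, (x - ρ i * y) := by
  unfold binaryFormEvalC
  by_cases hy : y = 0
  · subst hy
    rw [Finset.sum_eq_single d]
    · simp
    · intro i hi hne
      have : d - i ≠ 0 := by
        have := Finset.mem_range.mp hi
        omega
      simp [this]
    · simp
  · have h1 : (f.map (Int.castRingHom ℂ)).eval (x / y)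
        = ∑ i ∈ Finset.range (d + 1), (f.coeff i : ℂ) * (x / y) ^ i := by
      rw [Polynomial.eval_eq_sum_range' (n := d + 1)]
      · simp
      · have := Polynomial.natDegree_map_le (f := Int.castRingHom ℂ) (p := f)
        omega
    have h2 : ∏ i : Fin d, (x - ρ i * y) = y ^ d * ∏ i : Fin d, (x / y - ρ i) := by
      have : y ^ d = ∏ _i : Fin d, y := by simp
      rw [this, ← Finset.prod_mul_distrib]
      refine Finset.prod_congr rfl fun i _ => ?_
      field_simp
    rw [h2]
    have h3 : (f.coeff d : ℂ) * (y ^ d * ∏ i : Fin d, (x / y - ρ i))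
        = y ^ d * (f.map (Int.castRingHom ℂ)).eval (x / y) := by
      rw [hfact]
      simp only [Polynomial.eval_mul, Polynomial.eval_C, Polynomial.eval_prod,
        Polynomial.eval_sub, Polynomial.eval_X]
      ring
    rw [h3, h1, Finset.mul_sum]
    refine Finset.sum_congr rfl fun i hi => ?_
    have hi' : i ≤ d := Nat.lt_succ_iff.mp (Finset.mem_range.mp hi)
    rw [div_pow]
    have : y ^ d = y ^ i * y ^ (d - i) := by rw [← pow_add]; congr 1; omega
    rw [this]
    field_simp

lemma aeval_map_root {d : ℕ} {f : Polynomial ℤ} {ρ : Fin d → ℂ}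
    (hfact : f.map (Int.castRingHom ℂ) =
      Polynomial.C ((f.coeff d : ℤ) : ℂ) * ∏ i : Fin d, (Polynomial.X - Polynomial.C (ρ i)))
    (i : Fin d) : Polynomial.aeval (ρ i) (f.map (Int.castRingHom ℚ)) = 0 := by
  have h : (f.map (Int.castRingHom ℂ)).eval (ρ i) = 0 := by
    rw [hfact, Polynomial.eval_mul, Polynomial.eval_prod,
      Finset.prod_eq_zero (Finset.mem_univ i) (by simp), mul_zero]
  rw [Polynomial.aeval_def, ← Polynomial.eval_map, Polynomial.map_map,
    show (algebraMap ℚ ℂ).comp (Int.castRingHom ℚ) = Int.castRingHom ℂ from RingHom.ext_int _ _]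
  exact h

/-- A rational polynomial sharing a complex root with `f` is divisible by `f`: otherwise the two are
coprime, by irreducibility, and a Bézout relation is contradictory at the common root. -/
lemma map_dvd_of_root {d : ℕ} {f : Polynomial ℤ}
    (hirr : Irreducible (f.map (Int.castRingHom ℚ))) {ρ : Fin d → ℂ}
    (hfact : f.map (Int.castRingHom ℂ) =
      Polynomial.C ((f.coeff d : ℤ) : ℂ) * ∏ i : Fin d, (Polynomial.X - Polynomial.C (ρ i)))
    (i : Fin d) (g : Polynomial ℚ) (hg : Polynomial.aeval (ρ i) g = 0) :
    f.map (Int.castRingHom ℚ) ∣ g := by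
  by_contra h
  obtain ⟨a, b, hab⟩ := (hirr.coprime_iff_not_dvd).mpr h
  have := congrArg (Polynomial.aeval (ρ i)) hab
  simp [aeval_map_root hfact i, hg] at this

/-- The roots are irrational. -/
lemma coeffs_zero_of_root {d : ℕ} (hd : 3 ≤ d) {f : Polynomial ℤ} (hdeg : f.natDegree = d)
    (hirr : Irreducible (f.map (Int.castRingHom ℚ))) {ρ : Fin d → ℂ}
    (hfact : f.map (Int.castRingHom ℂ) =
      Polynomial.C ((f.coeff d : ℤ) : ℂ) * ∏ i : Fin d, (Polynomial.X - Polynomial.C (ρ i)))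
    (i : Fin d) (a b : ℤ) (h : (a : ℂ) * ρ i + b = 0) : a = 0 ∧ b = 0 := by
  have hdvd := map_dvd_of_root hirr hfact i
    (Polynomial.C (a : ℚ) * Polynomial.X + Polynomial.C (b : ℚ)) (by simpa using h)
  have hdeg' : (f.map (Int.castRingHom ℚ)).natDegree = d := by
    rw [Polynomial.natDegree_map_eq_of_injective (Int.castRingHom ℚ).injective_int, hdeg]
  have hz : Polynomial.C (a : ℚ) * Polynomial.X + Polynomial.C (b : ℚ) = 0 := by
    by_contra hne
    have h1 := Polynomial.natDegree_le_of_dvd hdvd hne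
    have h2 := Polynomial.natDegree_linear_le (a := (a : ℚ)) (b := (b : ℚ))
    omega
  have h0 := congrArg (fun p => Polynomial.coeff p 0) hz
  have h1 := congrArg (fun p => Polynomial.coeff p 1) hz
  simp only [Polynomial.coeff_add, Polynomial.coeff_C_mul, Polynomial.coeff_X_zero,
    Polynomial.coeff_X_one, Polynomial.coeff_C_zero, Polynomial.coeff_C_succ, Polynomial.coeff_zero,
    mul_zero, mul_one, zero_add, add_zero] at h0 h1
  exact ⟨by exact_mod_cast h1, by exact_mod_cast h0⟩

lemma roots_injective {d : ℕ} {f : Polynomial ℤ}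
    (hirr : Irreducible (f.map (Int.castRingHom ℚ))) {ρ : Fin d → ℂ}
    (hfact : f.map (Int.castRingHom ℂ) =
      Polynomial.C ((f.coeff d : ℤ) : ℂ) * ∏ i : Fin d, (Polynomial.X - Polynomial.C (ρ i))) :
    Function.Injective ρ := by
  have h1 : ((f.map (Int.castRingHom ℚ)).map (algebraMap ℚ ℂ)).Separable := hirr.separable.map
  have h2 : (f.map (Int.castRingHom ℚ)).map (algebraMap ℚ ℂ) = f.map (Int.castRingHom ℂ) := by
    rw [Polynomial.map_map]
    exact congrArg (fun φ => f.map φ) (RingHom.ext_int _ _)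
  rw [h2, hfact] at h1
  exact Polynomial.separable_prod_X_sub_C_iff.mp h1.of_mul_right

lemma binaryFormEvalC_intCast (f : Polynomial ℤ) (d : ℕ) (s t : ℤ) :
    binaryFormEvalC f d s t = ((binaryFormEvalZ f d s t : ℤ) : ℂ) := by
  simp [binaryFormEvalC, binaryFormEvalZ]

lemma binaryFormEvalC_smul (f : Polynomial ℤ) (d : ℕ) (r x y : ℂ) :
    binaryFormEvalC f d (r * x) (r * y) = r ^ d * binaryFormEvalC f d x y := by
  unfold binaryFormEvalC
  rw [Finset.mul_sum]
  refine Finset.sum_congr rfl fun i hi => ?_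
  have hi' : i ≤ d := Nat.lt_succ_iff.mp (Finset.mem_range.mp hi)
  have : r ^ d = r ^ i * r ^ (d - i) := by rw [← pow_add]; congr 1; omega
  rw [this, mul_pow, mul_pow]
  ring

/-- Discriminant computation: if distinct points `ρᵢ` are permuted by a fractional linear map of
determinant `D` with denominators `wᵢ`, then `|∏ wᵢ|² = |D|^d`. -/
lemma norm_sq_prod_eq {d : ℕ} (hd : 3 ≤ d) (ρ w : Fin d → ℂ) (hρ : Function.Injective ρ)
    (hw : ∀ i, w i ≠ 0) (D : ℂ) (σ : Equiv.Perm (Fin d))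
    (h : ∀ i j, w i * w j * (ρ (σ i) - ρ (σ j)) = D * (ρ i - ρ j)) :
    ‖∏ i, w i‖ ^ 2 = ‖D‖ ^ d := by
  -- The diagonal factors are set to `1` so that products run over all pairs.
  set g : Fin d → Fin d → ℂ := fun i j => if i = j then 1 else ρ i - ρ j with hg
  set P := ∏ i, w i with hP
  have hP0 : P ≠ 0 := Finset.prod_ne_zero_iff.mpr fun i _ => hw i
  have hG0 : ∏ i, ∏ j, g i j ≠ 0 := by
    refine Finset.prod_ne_zero_iff.mpr fun i _ => Finset.prod_ne_zero_iff.mpr fun j _ => ?_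
    simp only [hg]
    split_ifs with hij
    · exact one_ne_zero
    · exact sub_ne_zero.mpr (hρ.ne hij)
  have hperm : ∏ i, ∏ j, g (σ i) (σ j) = ∏ i, ∏ j, g i j := by
    rw [← Equiv.prod_comp σ (fun i => ∏ j, g i j)]
    refine Finset.prod_congr rfl fun i _ => ?_
    exact Equiv.prod_comp σ (fun j => g (σ i) j)
  have hpt : ∀ i j, w i * w j * g (σ i) (σ j) = (if i = j then w i ^ 2 else D) * g i j := by
    intro i j
    simp only [hg, σ.injective.eq_iff]
    split_ifs with hij
    · subst hij; ring
    · exact h i j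
  have hk : ∀ i, ∏ j, (if i = j then w i ^ 2 else D) = w i ^ 2 * D ^ (d - 1) := by
    intro i
    rw [← Finset.mul_prod_erase _ _ (Finset.mem_univ i), if_pos rfl]
    congr 1
    rw [Finset.prod_congr rfl (g := fun _ => D)
      (fun j hj => if_neg (Finset.ne_of_mem_erase hj).symm)]
    simp [Finset.card_erase_of_mem]
  have hmain : P ^ d * P ^ d = P ^ 2 * (D ^ (d - 1)) ^ d := by
    have e := Finset.prod_congr (rfl : (Finset.univ : Finset (Fin d)) = Finset.univ)
      fun i _ => Finset.prod_congr (rfl : (Finset.univ : Finset (Fin d)) = Finset.univ)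
        fun j _ => hpt i j
    simp only [Finset.prod_mul_distrib, hk, hperm] at e
    have e' := mul_right_cancel₀ hG0 e
    simpa [Finset.prod_pow, ← hP] using e'
  have hn := congrArg norm hmain
  simp only [norm_mul, norm_pow] at hn
  have hp : 0 < ‖P‖ := norm_pos_iff.mpr hP0
  have h3 : (‖P‖ ^ 2) ^ (d - 1) = (‖D‖ ^ d) ^ (d - 1) := by
    have hp2 : ‖P‖ ^ 2 ≠ 0 := by positivity
    apply mul_left_cancel₀ hp2
    rw [← pow_mul ‖D‖ d, mul_comm d, pow_mul ‖D‖, ← hn, ← pow_succ', Nat.sub_add_cancel (by omega)]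
    ring
  exact (pow_left_inj₀ (by positivity) (by positivity) (by omega)).mp h3

/-- Let `F(x,y) = c_d x^d + ⋯ + c₀ y^d ∈ ℤ[x,y]` be an irreducible binary form of
degree `d ≥ 3`, and let `ρ 0, …, ρ (d-1)` be the roots of `F(x,1)`. Then for integers
`s, t, u, v`, there exists an index `j` such that `ρ j = (v·ρ 0 − u)/(−t·ρ 0 + s)` if
and only if the matrix `M = (1/√|sv − tu|)·(s u; t v)` belongs to `Aut′|F|`;
moreover, if `M ∈ Aut′|F|` then `|sv − tu| = |F(s,t)/c_d|^(2/d)`. -/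
theorem enhanced_automorphisms_and_roots
    (d : ℕ) (hd : 3 ≤ d) (f : Polynomial ℤ) (hdeg : f.natDegree = d)
    (hirr : Irreducible (f.map (Int.castRingHom ℚ)))
    (ρ : Fin d → ℂ)
    (hfact : f.map (Int.castRingHom ℂ) =
      Polynomial.C ((f.coeff d : ℤ) : ℂ) * ∏ i : Fin d, (Polynomial.X - Polynomial.C (ρ i)))
    (s t u v : ℤ) :
    ((∃ j : Fin d,
        ρ j = ((v : ℂ) * ρ ⟨0, by omega⟩ - (u : ℂ)) / (-(t : ℂ) * ρ ⟨0, by omega⟩ + (s : ℂ))) ↔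
      MemEnhancedAut f d s t u v) ∧
    (MemEnhancedAut f d s t u v →
      (|(s * v - t * u : ℤ)| : ℝ) =
        |((binaryFormEvalZ f d s t : ℤ) : ℝ) / ((f.coeff d : ℤ) : ℝ)| ^ (2 / (d : ℝ))) := by
  have hf0 : f ≠ 0 := by
    rintro rfl
    simp at hirr
  have hcZ : f.coeff d ≠ 0 := by
    rw [← hdeg]
    exact Polynomial.leadingCoeff_ne_zero.mpr hf0
  have hc : ((f.coeff d : ℤ) : ℂ) ≠ 0 := by exact_mod_cast hcZ
  have hF := binaryFormEvalC_eq_prod hdeg hfact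
  have hirrat := coeffs_zero_of_root hd hdeg hirr hfact
  have hinj := roots_injective hirr hfact
  unfold MemEnhancedAut
  simp only [binaryFormEvalC_smul]
  generalize (⟨0, by omega⟩ : Fin d) = o
  set D : ℤ := s * v - t * u with hD
  have hDC : (D : ℂ) = s * v - t * u := by rw [hD]; push_cast; ring
  set q : ℝ := Real.sqrt |(D : ℝ)| with hq
  have hq2 : q ^ 2 = |(D : ℝ)| := Real.sq_sqrt (abs_nonneg _)
  have hq0 : 0 ≤ q := Real.sqrt_nonneg _
  have hd0 : d ≠ 0 := by omega
  have hFst : binaryFormEvalC f d s t = f.coeff d * ∏ i, ((s : ℂ) - ρ i * t) := hF s t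
  have hF10 : binaryFormEvalC f d 1 0 = f.coeff d := by rw [hF]; simp
  -- Evaluation of `F_M = ±F` at `(1, 0)`.
  have hkey : ((∀ x y : ℂ, ((q⁻¹ : ℝ) : ℂ) ^ d *
        binaryFormEvalC f d (s * x + u * y) (t * x + v * y) = binaryFormEvalC f d x y) ∨
      (∀ x y : ℂ, ((q⁻¹ : ℝ) : ℂ) ^ d *
        binaryFormEvalC f d (s * x + u * y) (t * x + v * y) = -binaryFormEvalC f d x y)) →
      D ≠ 0 ∧ q⁻¹ ^ d * |((binaryFormEvalZ f d s t : ℤ) : ℝ)| = |((f.coeff d : ℤ) : ℝ)| := by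
    intro hM
    have hn : ‖((q⁻¹ : ℝ) : ℂ) ^ d * binaryFormEvalC f d s t‖ = ‖((f.coeff d : ℤ) : ℂ)‖ := by
      rcases hM with hM | hM
      · have := hM 1 0
        simp only [mul_one, mul_zero, add_zero, hF10] at this
        rw [this]
      · have := hM 1 0
        simp only [mul_one, mul_zero, add_zero, hF10] at this
        rw [this, norm_neg]
    rw [binaryFormEvalC_intCast, norm_mul, norm_pow, Complex.norm_real, Complex.norm_intCast,
      Complex.norm_intCast, Real.norm_of_nonneg (inv_nonneg.mpr hq0)] at hn
    refine ⟨fun h0 => ?_, hn⟩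
    have hq' : q = 0 := by rw [hq, h0]; simp
    rw [hq'] at hn
    simp [hd0] at hn
    exact hcZ (by exact_mod_cast abs_eq_zero.mp hn.symm)
  refine ⟨⟨?_, ?_⟩, ?_⟩
  · rintro ⟨j, hj⟩
    have hy : -(t : ℂ) * ρ o + s ≠ 0 := by
      intro h
      -- Division by zero would make `ρ j = 0`, which is rational.
      rw [h, div_zero] at hj
      have := hirrat j 1 0 (by simp [hj])
      simp at this
    have hD0 : D ≠ 0 := by
      intro h0
      have h0C : (s : ℂ) * v - t * u = 0 := by rw [← hDC, h0]; simp
      rw [eq_div_iff hy] at hj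
      -- If `D = 0` then `ρ j` is rational, being a quotient of proportional linear forms.
      by_cases ht : t = 0
      · subst ht
        have hs : s ≠ 0 := by
          rintro rfl
          simp at hy
        have hv : v = 0 := by
          have : s * v = 0 := by simpa [hD] using h0
          exact (mul_eq_zero.mp this).resolve_left hs
        subst hv
        exact hs (hirrat j s u (by linear_combination (norm := (push_cast; ring)) hj)).1
      · have hz : ((t : ℂ) * ρ j + v) * (-(t : ℂ) * ρ o + s) = 0 := by
          linear_combination (t : ℂ) * hj + h0C
        have hz' := (mul_eq_zero.mp hz).resolve_right hy
        exact ht (hirrat j t v hz').1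
    have hw : ∀ i, (s : ℂ) - ρ i * t ≠ 0 := by
      intro i h
      obtain ⟨h1, h2⟩ := hirrat i (-t) s (by push_cast; linear_combination h)
      apply hD0
      rw [hD, h2, neg_eq_zero.mp h1]
      simp
    -- The polynomial `F(vX − u, s − tX)`, which vanishes at every root of `f`.
    let h : Polynomial ℚ := ∑ i ∈ Finset.range (d + 1), Polynomial.C (f.coeff i : ℚ) *
      (Polynomial.C (v : ℚ) * Polynomial.X - Polynomial.C (u : ℚ)) ^ i *
      (Polynomial.C (s : ℚ) - Polynomial.X * Polynomial.C (t : ℚ)) ^ (d - i)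
    have hh : ∀ z : ℂ, Polynomial.aeval z h = binaryFormEvalC f d (v * z - u) (s - z * t) := by
      intro z
      simp [h, binaryFormEvalC]
    have hroot : ∀ i, Polynomial.aeval (ρ i) h = 0 := by
      have h1 : Polynomial.aeval (ρ o) h = 0 := by
        rw [hh, hF, Finset.prod_eq_zero (Finset.mem_univ j), mul_zero]
        rw [eq_div_iff hy] at hj
        linear_combination -hj
      obtain ⟨k, hk⟩ := map_dvd_of_root hirr hfact o h h1
      intro i
      rw [hk, map_mul, aeval_map_root hfact i, zero_mul]
    have hex : ∀ i, ∃ k, (v : ℂ) * ρ i - u = ρ k * (s - ρ i * t) := by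
      intro i
      have h1 := hroot i
      rw [hh, hF] at h1
      obtain ⟨k, -, hk⟩ := Finset.prod_eq_zero_iff.mp ((mul_eq_zero.mp h1).resolve_left hc)
      exact ⟨k, sub_eq_zero.mp hk⟩
    choose σ hσ using hex
    have hdisc : ∀ i k, ((s : ℂ) - ρ i * t) * (s - ρ k * t) * (ρ (σ i) - ρ (σ k))
        = D * (ρ i - ρ k) := by
      intro i k
      rw [hDC]
      linear_combination -((s : ℂ) - ρ k * t) * hσ i + ((s : ℂ) - ρ i * t) * hσ k
    have hσinj : Function.Injective σ := by
      intro i k hik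
      have h1 := hdisc i k
      rw [hik, sub_self, mul_zero] at h1
      have hDC0 : (D : ℂ) ≠ 0 := by exact_mod_cast hD0
      exact hinj (sub_eq_zero.mp ((mul_eq_zero.mp h1.symm).resolve_left hDC0))
    let τ : Equiv.Perm (Fin d) :=
      Equiv.ofBijective σ (Finite.injective_iff_bijective.mp hσinj)
    have hnorm := norm_sq_prod_eq hd ρ (fun i => (s : ℂ) - ρ i * t) hinj hw (D : ℂ) τ hdisc
    have htrans : ∀ x y : ℂ, binaryFormEvalC f d (s * x + u * y) (t * x + v * y)
        = (∏ i, ((s : ℂ) - ρ i * t)) * binaryFormEvalC f d x y := by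
      intro x y
      rw [hF, hF, ← Equiv.prod_comp τ (fun i => x - ρ i * y), mul_left_comm,
        ← Finset.prod_mul_distrib]
      congr 1
      refine Finset.prod_congr rfl fun i _ => ?_
      have : τ i = σ i := rfl
      rw [this]
      linear_combination -y * hσ i
    -- The multiplier is the rational number `F(s,t)/c`.
    obtain ⟨r, hr⟩ : ∃ r : ℝ, ∏ i, ((s : ℂ) - ρ i * t) = (r : ℂ) := by
      refine ⟨(binaryFormEvalZ f d s t : ℝ) / (f.coeff d : ℝ), ?_⟩
      push_cast
      rw [eq_div_iff hc, ← binaryFormEvalC_intCast, hFst, mul_comm]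
    rw [hr, Complex.norm_real, Complex.norm_intCast, ← hq2, Real.norm_eq_abs, sq_abs, ← pow_mul,
      mul_comm 2 d, pow_mul] at hnorm
    have hqpos : 0 < q := Real.sqrt_pos.mpr (abs_pos.mpr (by exact_mod_cast hD0))
    have hqC : ((q : ℝ) : ℂ) ≠ 0 := by exact_mod_cast hqpos.ne'
    simp only [htrans, hr]
    rcases sq_eq_sq_iff_eq_or_eq_neg.mp hnorm with hr' | hr'
    · left
      intro x y
      rw [hr']
      push_cast
      rw [← mul_assoc, ← mul_pow, inv_mul_cancel₀ hqC]
      simp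
    · right
      intro x y
      rw [hr']
      push_cast
      rw [← mul_assoc, mul_neg, ← mul_pow, inv_mul_cancel₀ hqC]
      simp
  · intro hM
    have hD0 := (hkey hM).1
    have hDC0 : (D : ℂ) ≠ 0 := by exact_mod_cast hD0
    have hy : -(t : ℂ) * ρ o + s ≠ 0 := by
      intro h
      obtain ⟨h1, h2⟩ := hirrat o (-t) s (by push_cast; exact h)
      apply hD0
      rw [hD, h2, neg_eq_zero.mp h1]
      simp
    -- The matrix sends `(vρ₀ − u, s − tρ₀)` to `D · (ρ₀, 1)`, a zero of `F`.
    have hz : binaryFormEvalC f d (s * (v * ρ o - u) + u * (-(t : ℂ) * ρ o + s))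
        (t * (v * ρ o - u) + v * (-(t : ℂ) * ρ o + s)) = 0 := by
      rw [hF, Finset.prod_eq_zero (Finset.mem_univ o), mul_zero]
      ring
    have hz2 : binaryFormEvalC f d (v * ρ o - u) (-(t : ℂ) * ρ o + s) = 0 := by
      rcases hM with hM | hM
      · rw [← hM, hz, mul_zero]
      · rw [← neg_eq_zero, ← hM, hz, mul_zero]
    rw [hF] at hz2
    obtain ⟨k, -, hk⟩ := Finset.prod_eq_zero_iff.mp ((mul_eq_zero.mp hz2).resolve_left hc)
    refine ⟨k, ?_⟩
    rw [eq_div_iff hy]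
    exact (sub_eq_zero.mp hk).symm
  · intro hM
    obtain ⟨hD0, hn⟩ := hkey hM
    have hqpos : 0 < q := Real.sqrt_pos.mpr (abs_pos.mpr (by exact_mod_cast hD0))
    have hcR : |((f.coeff d : ℤ) : ℝ)| ≠ 0 := by
      rw [abs_ne_zero]
      exact_mod_cast hcZ
    have h1 : |((binaryFormEvalZ f d s t : ℤ) : ℝ) / ((f.coeff d : ℤ) : ℝ)| = q ^ d := by
      rw [abs_div, div_eq_iff hcR, ← hn, ← mul_assoc, ← mul_pow, mul_inv_cancel₀ hqpos.ne']
      simp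
    rw [h1, ← Real.rpow_natCast, ← Real.rpow_mul hq0, mul_div_cancel₀ _ (by exact_mod_cast hd0)]
    rw [show (2 : ℝ) = ((2 : ℕ) : ℝ) by norm_num, Real.rpow_natCast, hq2]
end
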